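/- Let Z be a real random variable with Z ~ N(0, σ²), σ > 0, let α > 0 and m > 0, and set W = Z + m. Then P([1 + exp(2α) exp(−αW²/σ²)]⁻¹ W ≤ m) > 1/2 = P(Z ≤ 0). -/

import Mathlib

open MeasureTheory Matrix Real Filter Topology ENNReal NNReal

noncomputable section

/-- Euclidean norm of a finite tuple. -/
def enorm2 {ι : Type*} [Fintype ι] (v : ι → ℝ) : ℝ := Real.sqrt (∑ i, v i ^ 2)

/-- The `N(0, σ² I)` distribution on `ι → ℝ`, given by its Lebesgue density. -/
def gaussPi (ι : Type*) [Fintype ι] (σ2 : ℝ) : Measure (ι → ℝ) :=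
  volume.withDensity fun x => ENNReal.ofReal
    ((2 * π * σ2) ^ (-(Fintype.card ι : ℝ) / 2) * Real.exp (-(enorm2 x) ^ 2 / (2 * σ2)))

/-- The Lebesgue density of the `N(0, σ² Q⁻¹)` distribution on `ι → ℝ`
(for `Q` symmetric positive definite). -/
def gaussCovDens {ι : Type*} [Fintype ι] [DecidableEq ι] (σ2 : ℝ) (Q : Matrix ι ι ℝ)
    (x : ι → ℝ) : ℝ :=
  (2 * π * σ2) ^ (-(Fintype.card ι : ℝ) / 2) * Real.sqrt Q.det *
    Real.exp (-(x ⬝ᵥ Q.mulVec x) / (2 * σ2))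

/-- The `N(0, σ² Q⁻¹)` distribution on `ι → ℝ` (for `Q` symmetric positive definite),
given by its Lebesgue density. -/
def gaussCov {ι : Type*} [Fintype ι] [DecidableEq ι] (σ2 : ℝ) (Q : Matrix ι ι ℝ) :
    Measure (ι → ℝ) :=
  volume.withDensity fun x => ENNReal.ofReal (gaussCovDens σ2 Q x)

open Classical in
/-- Symmetric positive semidefinite square root (junk value `0` off the psd cone). -/
def msqrt {ι : Type*} [Fintype ι] [DecidableEq ι] (A : Matrix ι ι ℝ) : Matrix ι ι ℝ :=
  if h : A.PosSemidef then
    h.1.eigenvectorUnitary.1 * diagonal (RCLike.ofReal ∘ Real.sqrt ∘ h.1.eigenvalues) *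
      (star h.1.eigenvectorUnitary : Matrix ι ι ℝ)
  else 0

open Classical in
/-- Smallest eigenvalue of a symmetric matrix (junk value `0` otherwise). -/
def lamMin {ι : Type*} [Fintype ι] [DecidableEq ι] (A : Matrix ι ι ℝ) : ℝ :=
  if h : A.IsHermitian then ⨅ i, h.eigenvalues i else 0

open Classical in
/-- Largest eigenvalue of a symmetric matrix (junk value `0` otherwise). -/
def lamMax {ι : Type*} [Fintype ι] [DecidableEq ι] (A : Matrix ι ι ℝ) : ℝ :=
  if h : A.IsHermitian then ⨆ i, h.eigenvalues i else 0

variable {n k₁ k₂ : ℕ}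

/-- First block of columns of the design matrix. -/
def X1 (X : Matrix (Fin n) (Fin k₁ ⊕ Fin k₂) ℝ) : Matrix (Fin n) (Fin k₁) ℝ :=
  X.submatrix id Sum.inl

/-- Second block of columns of the design matrix. -/
def X2 (X : Matrix (Fin n) (Fin k₁ ⊕ Fin k₂) ℝ) : Matrix (Fin n) (Fin k₂) ℝ :=
  X.submatrix id Sum.inr

/-- Unrestricted least squares estimator. -/
def betaU (X : Matrix (Fin n) (Fin k₁ ⊕ Fin k₂) ℝ) (Y : Fin n → ℝ) : (Fin k₁ ⊕ Fin k₂) → ℝ :=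
  (Xᵀ * X)⁻¹.mulVec (Xᵀ.mulVec Y)

/-- Restricted least squares estimator. -/
def betaR (X : Matrix (Fin n) (Fin k₁ ⊕ Fin k₂) ℝ) (Y : Fin n → ℝ) : (Fin k₁ ⊕ Fin k₂) → ℝ :=
  Sum.elim (((X1 X)ᵀ * X1 X)⁻¹.mulVec ((X1 X)ᵀ.mulVec Y)) (fun _ => 0)

/-- Risk estimate of the restricted model. -/
def rR (X : Matrix (Fin n) (Fin k₁ ⊕ Fin k₂) ℝ) (σ2 : ℝ) (Y : Fin n → ℝ) : ℝ :=
  Y ⬝ᵥ Y - betaR X Y ⬝ᵥ (Xᵀ * X).mulVec (betaR X Y) + σ2 * (2 * k₁ - n)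

/-- Risk estimate of the unrestricted model. -/
def rU (X : Matrix (Fin n) (Fin k₁ ⊕ Fin k₂) ℝ) (σ2 : ℝ) (Y : Fin n → ℝ) : ℝ :=
  Y ⬝ᵥ Y - betaU X Y ⬝ᵥ (Xᵀ * X).mulVec (betaU X Y) + σ2 * (2 * (k₁ + k₂) - n)

/-- The model averaging weight `λ̂`. -/
def lamHat (α σ2 : ℝ) (X : Matrix (Fin n) (Fin k₁ ⊕ Fin k₂) ℝ) (Y : Fin n → ℝ) : ℝ :=
  Real.exp (-(α * rR X σ2 Y) / σ2) /
    (Real.exp (-(α * rR X σ2 Y) / σ2) + Real.exp (-(α * rU X σ2 Y) / σ2))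

/-- Leung and Barron's model averaging estimator `β̃`. -/
def mavg (α σ2 : ℝ) (X : Matrix (Fin n) (Fin k₁ ⊕ Fin k₂) ℝ) (Y : Fin n → ℝ) :
    (Fin k₁ ⊕ Fin k₂) → ℝ :=
  lamHat α σ2 X Y • betaR X Y + (1 - lamHat α σ2 X Y) • betaU X Y

/-- Projection on the column space of `X₁`. -/
def projR (X : Matrix (Fin n) (Fin k₁ ⊕ Fin k₂) ℝ) : Matrix (Fin n) (Fin n) ℝ :=
  X1 X * ((X1 X)ᵀ * X1 X)⁻¹ * (X1 X)ᵀ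

/-- Projection on the column space of `X`. -/
def projU (X : Matrix (Fin n) (Fin k₁ ⊕ Fin k₂) ℝ) : Matrix (Fin n) (Fin n) ℝ :=
  X * (Xᵀ * X)⁻¹ * Xᵀ

/-- The distribution `P_{n,β,σ}` of `Y = Xβ + u`, `u ~ N(0, σ² Iₙ)`. -/
def Pmeas (X : Matrix (Fin n) (Fin k₁ ⊕ Fin k₂) ℝ) (β : (Fin k₁ ⊕ Fin k₂) → ℝ) (σ2 : ℝ) :
    Measure (Fin n → ℝ) :=
  (gaussPi (Fin n) σ2).map (fun u => X.mulVec β + u)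

/-- The function `h_{a,b}(ξ) = ξ / (1 + a exp(−ξ²/b))`. -/
def hfun (a b ξ : ℝ) : ℝ := ξ / (1 + a * Real.exp (-ξ ^ 2 / b))

/-- The inverse `g_{a,b}` of `h_{a,b}`. -/
def gfun (a b : ℝ) : ℝ → ℝ := Function.invFun (hfun a b)

open Classical in
/-- `g(‖w‖) w / ‖w‖`, with the convention that this is `0` for `w = 0`. -/
def gdir (a b : ℝ) {ι : Type*} [Fintype ι] (w : ι → ℝ) : ι → ℝ :=
  if w = 0 then 0 else (gfun a b (enorm2 w) / enorm2 w) • w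


/-- The finite-sample density `f_{n,β,σ}` of `√n(β̃ − β)` (Theorem 3 of the paper). -/
def fdens {n k₁ k₂ : ℕ} (X : Matrix (Fin n) (Fin k₁ ⊕ Fin k₂) ℝ)
    (β : (Fin k₁ ⊕ Fin k₂) → ℝ) (σ2 α : ℝ) (t : (Fin k₁ ⊕ Fin k₂) → ℝ) : ℝ :=
  let a := Real.exp (2 * α * k₂)
  let b := σ2 / α
  let S := (X2 X)ᵀ * (1 - projR X) * X2 X
  let w := (Real.sqrt n)⁻¹ • (msqrt S).mulVec ((t ∘ Sum.inr) + Real.sqrt n • (β ∘ Sum.inr))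
  (2 * π * σ2) ^ (-((k₁ : ℝ) + k₂) / 2) * Real.sqrt (((n : ℝ)⁻¹ • (Xᵀ * X)).det) *
    Real.exp (-(enorm2 ((Real.sqrt n)⁻¹ •
        ((msqrt ((X1 X)ᵀ * X1 X)).mulVec (t ∘ Sum.inl) +
          ((msqrt ((X1 X)ᵀ * X1 X))⁻¹ * (X1 X)ᵀ * X2 X).mulVec (t ∘ Sum.inr)))) ^ 2 /
      (2 * σ2)) *
    (1 + Real.exp (-(α / σ2) * gfun a b (enorm2 w) ^ 2 + 2 * α * k₂)) ^ (k₂ : ℕ) *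
    (1 + (2 * α / σ2) * gfun a b (enorm2 w) ^ 2 *
        (1 + Real.exp ((α / σ2) * gfun a b (enorm2 w) ^ 2 - 2 * α * k₂))⁻¹)⁻¹ *
    Real.exp (-(enorm2 (gdir a b w - (msqrt S).mulVec (β ∘ Sum.inr))) ^ 2 / (2 * σ2))

/-- The density `f_{∞,γ}` of the limiting distribution (formula (13) of the paper),
stated for a general symmetric positive definite matrix in place of `Q`. -/
def fInfty {k₁ k₂ : ℕ} (Q : Matrix (Fin k₁ ⊕ Fin k₂) (Fin k₁ ⊕ Fin k₂) ℝ) (σ2 α : ℝ)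
    (γ : Fin k₂ → ℝ) (t : (Fin k₁ ⊕ Fin k₂) → ℝ) : ℝ :=
  let a := Real.exp (2 * α * k₂)
  let b := σ2 / α
  let S := Q.toBlocks₂₂ - Q.toBlocks₂₁ * Q.toBlocks₁₁⁻¹ * Q.toBlocks₁₂
  let w := (msqrt S).mulVec ((t ∘ Sum.inr) + γ)
  (2 * π * σ2) ^ (-((k₁ : ℝ) + k₂) / 2) * Real.sqrt Q.det *
    Real.exp (-(enorm2 ((msqrt Q.toBlocks₁₁).mulVec (t ∘ Sum.inl) +
        ((msqrt Q.toBlocks₁₁)⁻¹ * Q.toBlocks₁₂).mulVec (t ∘ Sum.inr))) ^ 2 / (2 * σ2)) *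
    (1 + Real.exp (-(α / σ2) * gfun a b (enorm2 w) ^ 2 + 2 * α * k₂)) ^ (k₂ : ℕ) *
    (1 + (2 * α / σ2) * gfun a b (enorm2 w) ^ 2 *
        (1 + Real.exp ((α / σ2) * gfun a b (enorm2 w) ^ 2 - 2 * α * k₂))⁻¹)⁻¹ *
    Real.exp (-(enorm2 (gdir a b w - (msqrt S).mulVec γ)) ^ 2 / (2 * σ2))


/-- The limiting law (12): the distribution of
`B_∞γ + C_∞Z₁ + [1 + exp(2αk₂) exp(−α‖Z₂ + (Q₂₂ − Q₂₁Q₁₁⁻¹Q₁₂)^{1/2}γ‖²/σ²)]⁻¹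
  · (D_∞Z₂ − B_∞γ)` with `Z₁ ~ N(0, σ²I_{k₁})`, `Z₂ ~ N(0, σ²I_{k₂})` independent. -/
def limitLaw {k₁ k₂ : ℕ} (Q : Matrix (Fin k₁ ⊕ Fin k₂) (Fin k₁ ⊕ Fin k₂) ℝ) (σ2 α : ℝ)
    (γ : Fin k₂ → ℝ) : Measure ((Fin k₁ ⊕ Fin k₂) → ℝ) :=
  ((gaussPi (Fin k₁) σ2).prod (gaussPi (Fin k₂) σ2)).map
    (fun Z : (Fin k₁ → ℝ) × (Fin k₂ → ℝ) =>
      (fromRows (Q.toBlocks₁₁⁻¹ * Q.toBlocks₁₂) (-1)).mulVec γ +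
      (fromRows (msqrt Q.toBlocks₁₁)⁻¹ 0).mulVec Z.1 +
      (1 + Real.exp (2 * α * k₂) *
          Real.exp (-α * (enorm2 (Z.2 +
            (msqrt (Q.toBlocks₂₂ - Q.toBlocks₂₁ * Q.toBlocks₁₁⁻¹ * Q.toBlocks₁₂)).mulVec
              γ)) ^ 2 / σ2))⁻¹ •
        ((fromRows
            (-(Q.toBlocks₁₁⁻¹ * Q.toBlocks₁₂ *
              (msqrt (Q.toBlocks₂₂ - Q.toBlocks₂₁ * Q.toBlocks₁₁⁻¹ * Q.toBlocks₁₂))⁻¹))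
            ((msqrt (Q.toBlocks₂₂ - Q.toBlocks₂₁ * Q.toBlocks₁₁⁻¹ * Q.toBlocks₁₂))⁻¹)).mulVec
            Z.2 -
          (fromRows (Q.toBlocks₁₁⁻¹ * Q.toBlocks₁₂) (-1)).mulVec γ))


/-!
Multiplying by a factor in `[0, 1)` sends every point `≤ m` to a point `≤ m` and sends `m > 0`
itself strictly below `m`. Hence the event contains `{Z ≤ 0}`, which has probability at least `1/2`
by symmetry, and, by continuity, also a short interval to the right of `0`, which has positive
probability.
-/

section NegInvariant

variable {G : Type*} [AddCommGroup G] [LinearOrder G] [IsOrderedAddMonoid G] [MeasurableSpace G]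
  [MeasurableNeg G] {μ : Measure G} [μ.IsNegInvariant]

lemma measure_Ici_zero_eq_measure_Iic_zero : μ (Set.Ici 0) = μ (Set.Iic 0) := by
  simpa using Measure.measure_preimage_neg μ (Set.Iic 0)

lemma half_le_measure_Iic_zero [IsProbabilityMeasure μ] : 1 / 2 ≤ μ (Set.Iic 0) := by
  refine ENNReal.div_le_of_le_mul ?_
  calc 1 = μ (Set.Iic 0 ∪ Set.Ici 0) := by rw [Set.Iic_union_Ici, measure_univ]
    _ ≤ μ (Set.Iic 0) + μ (Set.Ici 0) := measure_union_le _ _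
    _ = μ (Set.Iic 0) * 2 := by rw [measure_Ici_zero_eq_measure_Iic_zero, mul_two]

variable [TopologicalSpace G] [OpensMeasurableSpace G]

lemma measure_Iic_zero_eq_half [ClosedIicTopology G] [IsProbabilityMeasure μ]
    [NullSingletonClass μ] : μ (Set.Iic 0) = 1 / 2 := by
  refine (ENNReal.eq_div_iff two_ne_zero ofNat_ne_top).2 ?_
  calc 2 * μ (Set.Iic 0) = μ (Set.Iic 0) + μ (Set.Ici 0) := by
        rw [measure_Ici_zero_eq_measure_Iic_zero, two_mul]
    _ = μ (Set.Iic 0) + μ (Set.Iic 0)ᶜ := by rw [Set.compl_Iic, measure_congr Ioi_ae_eq_Ici]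
    _ = 1 := prob_add_prob_compl measurableSet_Iic

lemma half_lt_measure_setOf_le {β : Type*} [TopologicalSpace β] [LinearOrder β]
    [ClosedIciTopology β] [OrderTopology G] [DenselyOrdered G] [NoMaxOrder G]
    [IsProbabilityMeasure μ] [μ.IsOpenPosMeasure] {f : G → β} {c : β}
    (hf : ContinuousWithinAt f (Set.Ioi 0) 0) (hle : ∀ z ≤ 0, f z ≤ c) (hlt : f 0 < c) :
    1 / 2 < μ {z | f z ≤ c} := by
  obtain ⟨ε, hε, hsub⟩ := mem_nhdsGT_iff_exists_Ioo_subset.1 (hf.eventually_lt_const hlt)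
  have hpos : μ (Set.Ioo 0 ε) ≠ 0 := isOpen_Ioo.measure_ne_zero μ (Set.nonempty_Ioo.2 hε)
  have hdisj : Disjoint (Set.Iic 0) (Set.Ioo 0 ε) :=
    (Set.Iic_disjoint_Ioi le_rfl).mono_right Set.Ioo_subset_Ioi_self
  calc 1 / 2 ≤ μ (Set.Iic 0) := half_le_measure_Iic_zero
    _ < μ (Set.Iic 0) + μ (Set.Ioo 0 ε) := ENNReal.lt_add_right (measure_ne_top _ _) hpos
    _ = μ (Set.Iic 0 ∪ Set.Ioo 0 ε) := (measure_union hdisj measurableSet_Ioo).symm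
    _ ≤ μ {z | f z ≤ c} := measure_mono (Set.union_subset hle fun _ hz => (hsub hz).le)

end NegInvariant

instance isNegInvariant_gaussianReal_zero (v : ℝ≥0) :
    (ProbabilityTheory.gaussianReal 0 v).IsNegInvariant :=
  ⟨ProbabilityTheory.gaussianReal_map_neg.trans (by rw [neg_zero])⟩

instance isOpenPosMeasure_gaussianReal (x : ℝ) (v : ℝ≥0) [NeZero v] :
    (ProbabilityTheory.gaussianReal x v).IsOpenPosMeasure :=
  (ProbabilityTheory.gaussianReal_absolutelyContinuous' x (NeZero.ne v)).isOpenPosMeasure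

instance nullSingletonClass_gaussianReal_of_neZero (x : ℝ) (v : ℝ≥0) [NeZero v] :
    NullSingletonClass (ProbabilityTheory.gaussianReal x v) :=
  ProbabilityTheory.nullSingletonClass_gaussianReal (NeZero.ne v)

lemma inv_one_add_mem_Ioo {K : Type*} [Field K] [LinearOrder K] [IsStrictOrderedRing K] {x : K}
    (hx : 0 < x) : (1 + x)⁻¹ ∈ Set.Ioo 0 1 :=
  ⟨by positivity, inv_lt_one_of_one_lt₀ (lt_add_of_pos_right 1 hx)⟩

lemma mul_le_of_mem_Icc_of_le {R : Type*} [Semiring R] [PartialOrder R] [IsOrderedRing R]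
    {r w m : R} (hr : r ∈ Set.Icc 0 1) (hm : 0 ≤ m) (hw : w ≤ m) : r * w ≤ m :=
  (mul_le_mul_of_nonneg_left hw hr.1).trans (mul_le_of_le_one_left hm hr.2)

theorem statement15_general {μ : Measure ℝ} [IsProbabilityMeasure μ] [μ.IsNegInvariant]
    [μ.IsOpenPosMeasure] [NullSingletonClass μ] {s : ℝ → ℝ} {m : ℝ} (hm : 0 < m)
    (hcont : ContinuousAt s m) (hs : ∀ w, s w ∈ Set.Ico 0 1) :
    1 / 2 < μ {z | s (z + m) * (z + m) ≤ m} ∧ μ {z | z ≤ 0} = 1 / 2 := by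
  refine ⟨half_lt_measure_setOf_le ?_ (fun z hz => ?_) ?_, measure_Iic_zero_eq_half⟩
  · have hshift : ContinuousAt (fun z => s (z + m)) 0 :=
      ContinuousAt.comp (g := s) (by rwa [zero_add]) (by fun_prop)
    exact (hshift.mul (by fun_prop)).continuousWithinAt
  · exact mul_le_of_mem_Icc_of_le (Set.Ico_subset_Icc_self (hs _)) hm.le (by linarith)
  · simpa only [zero_add] using mul_lt_of_lt_one_left hm (hs m).2

/-- for `Z ~ N(0,σ²)`, `m > 0` and `W = Z + m`,
`P([1 + exp(2α)exp(−αW²/σ²)]⁻¹ W ≤ m) > 1/2 = P(Z ≤ 0)`. -/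
theorem statement15 (σ α m : ℝ) (hσ : 0 < σ) (hα : 0 < α) (hm : 0 < m) :
    (1 / 2 : ℝ≥0∞) < (ProbabilityTheory.gaussianReal 0 (Real.toNNReal (σ ^ 2)))
        {z | (1 + Real.exp (2 * α) * Real.exp (-α * (z + m) ^ 2 / σ ^ 2))⁻¹ * (z + m) ≤ m} ∧
    (ProbabilityTheory.gaussianReal 0 (Real.toNNReal (σ ^ 2))) {z | z ≤ 0} =
      (1 / 2 : ℝ≥0∞) := by
  have : NeZero (Real.toNNReal (σ ^ 2)) := ⟨(Real.toNNReal_pos.2 (by positivity)).ne'⟩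
  exact statement15_general
    (s := fun w => (1 + Real.exp (2 * α) * Real.exp (-α * w ^ 2 / σ ^ 2))⁻¹) hm
    (by fun_prop (disch := positivity))
    fun _ => Set.Ioo_subset_Ico_self (inv_one_add_mem_Ioo (by positivity))

end
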